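/- Let M = (M_k) be a nondecreasing logarithmically convex sequence of positive real numbers with M_0 = 1 such that sup_k (M_{k+1}/M_k)^{1/k} < ∞ (C_M is closed under differentiation) and lim_k M_k^{1/k} = ∞ (C_M properly contains the analytic functions). Let E : [0,∞) → [0,1) be an increasing continuous function with E(0) = 0 and lim_{r→0⁺} E(r)/r = ∞, set ρ_n := M_n/M_{n+1} and q_n := E(ρ_n)/ρ_n, let Λ be an unbounded set of positive even integers with q_λ > 1 for all λ ∈ Λ, and set δ_λ := dist(E(ρ_λ), {E(ρ_{λ'}) : λ' ∈ Λ, λ' ≠ λ}). Then there is a constant B > 0, depending only on M, with the following property: if there exists λ₀ ∈ Λ such that δ_λ ≥ B·M_λ^{−1/λ} for all λ ∈ Λ with λ ≥ λ₀, then there exist ε > 0 and points x_λ := (E(ρ_λ), 0) → (0,0) such that |∂^λ F_Γ/∂x₂^λ (x_λ)| ≥ ε^λ·λ!·M_λ·M_λ/4^λ for every λ ∈ Λ with λ ≥ λ₀, where F_Γ(x) := Σ_{λ∈Λ} f_{q_λ,ρ_λ}(x)/(φ(ρ_λ^{−1})·2^λ). -/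

import Mathlib

open Real Filter Topology
open scoped Classical
noncomputable section
def pd1 (f : ℝ × ℝ → ℝ) : ℝ × ℝ → ℝ := fun x => fderiv ℝ f x (1, 0)
def pd2 (f : ℝ × ℝ → ℝ) : ℝ × ℝ → ℝ := fun x => fderiv ℝ f x (0, 1)
def pd (α : ℕ × ℕ) (f : ℝ × ℝ → ℝ) : ℝ × ℝ → ℝ := pd1^[α.1] (pd2^[α.2] f)
def LogConvexSeq (M : ℕ → ℝ) : Prop := Monotone (fun k => M (k + 1) / M k)
def MemDC (M : ℕ → ℝ) (f : ℝ × ℝ → ℝ) : Prop :=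
  ContDiff ℝ (⊤ : ℕ∞) f ∧
  ∀ K : Set (ℝ × ℝ), IsCompact K →
    ∃ A > (0:ℝ), ∃ B > (0:ℝ), ∀ x ∈ K, ∀ α : ℕ × ℕ,
      |pd α f x| ≤ A * B ^ (α.1 + α.2) * (Nat.factorial α.1 * Nat.factorial α.2) * M (α.1 + α.2)
def blowup : ℝ × ℝ → ℝ × ℝ := fun p => (p.1 * Real.cos p.2, p.1 * Real.sin p.2)
def ostrowski (M : ℕ → ℝ) (r : ℝ) : ℝ := ⨆ n : ℕ, r ^ (n + 2) / M n
def baseH (M : ℕ → ℝ) (x : ℝ × ℝ) : ℝ :=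
  ∑' k : ℕ,
    (M (k + 2) / M (k + 1)) ^ 2 / (2 ^ (k + 1) * ostrowski M (M (k + 2) / M (k + 1))) *
      (1 / (x.1 ^ 2 + (M (k + 2) / M (k + 1) * x.2) ^ 2 + 1))
def blockF (M : ℕ → ℝ) (q ρ : ℝ) (x : ℝ × ℝ) : ℝ := baseH M (x.1 / ρ - q, x.2 / ρ)
def rhoSeq (M : ℕ → ℝ) (n : ℕ) : ℝ := M n / M (n + 1)
def FGamma (M : ℕ → ℝ) (E : ℝ → ℝ) (Λ : Set ℕ) (x : ℝ × ℝ) : ℝ :=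
  ∑' l : ℕ, Set.indicator Λ
    (fun l => blockF M (E (rhoSeq M l) / rhoSeq M l) (rhoSeq M l) x /
      (ostrowski M (rhoSeq M l)⁻¹ * 2 ^ l)) l

/-!
All even derivatives in `x₂` of `1 / (1 + x₁² + x₂²)` at a point `(a, 0)` have the same sign
`(-1) ^ j`, where `2 * j` is the order: on the vertical line through `(a, 0)` they are
`(-1) ^ j (2 j)! / (1 + a²) ^ (j + 1)`. Both `h` and `F_Γ` are sums with nonnegative weights of
copies of this kernel that are translated along the first axis and dilated, so no cancellation
occurs at points of the axis and a derivative of even order is at least as large as each of its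
summands. At `x_λ` keep the summand `λ` of `F_Γ` and, inside it, the summand `λ` of `h`. By
logarithmic convexity the supremum defining `φ(m_λ)` is attained at the index `λ`, so that this
summand is exactly `λ! M_λ² m_λ⁻² / 4 ^ λ`; closedness under differentiation gives
`m_λ ≤ C ^ λ`, whence `ε = C⁻²`.

Termwise differentiation is justified by the boundedness of all derivatives of the kernel together
with the bound `m_k ^ n / φ(m_k) = O(1)`, valid for every `n`, which makes the weights decay faster
than any power of the dilation factors.
-/

open scoped ContDiff Asymptotics

section BoundedDerivatives

variable {E F G : Type*} [NormedAddCommGroup E] [NormedSpace ℝ E] [NormedAddCommGroup F]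
  [NormedSpace ℝ F] [NormedAddCommGroup G] [NormedSpace ℝ G]

/-- Smooth functions all of whose iterated derivatives are bounded on the whole space (the
boundedness is written as `O(1)` along the trivial filter `⊤`). -/
structure HasBoundedDerivs (f : E → F) : Prop where
  contDiff : ContDiff ℝ ∞ f
  isBigO_one : ∀ n : ℕ, iteratedFDeriv ℝ n f =O[⊤] fun _ => (1 : ℝ)

lemma isBigO_iteratedFDeriv_smul {f : E → ℝ} {g : E → F} (hf : ContDiff ℝ ∞ f)
    (hg : ContDiff ℝ ∞ g) {l : Filter E} {a b : E → ℝ} (n : ℕ)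
    (hfa : ∀ i ≤ n, iteratedFDeriv ℝ i f =O[l] a) (hgb : ∀ i ≤ n, iteratedFDeriv ℝ i g =O[l] b) :
    iteratedFDeriv ℝ n (fun x => f x • g x) =O[l] fun x => a x * b x := by
  have hLeibniz := norm_iteratedFDeriv_smul_le hf hg (n := n) (hn := mod_cast le_top)
  refine (Asymptotics.IsBigO.of_norm_le hLeibniz).trans (.fun_sum fun i hi => ?_)
  have hin : i ≤ n := Finset.mem_range_succ_iff.mp hi
  simpa only [mul_assoc] using
    ((hfa i hin).norm_left.mul (hgb (n - i) (n.sub_le i)).norm_left).const_mul_left _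

lemma isBigO_iteratedFDeriv_clm (L : E →L[ℝ] F) (n : ℕ) :
    iteratedFDeriv ℝ n L =O[⊤] fun x => 1 + ‖x‖ := by
  have hone : (fun _ : E => (1 : ℝ)) =O[⊤] fun x => 1 + ‖x‖ :=
    .of_norm_le fun x => by simp
  match n with
  | 0 =>
    refine Asymptotics.isBigO_top.mpr ⟨‖L‖, fun x => ?_⟩
    rw [norm_iteratedFDeriv_zero, Real.norm_of_nonneg (by positivity)]
    exact (L.le_opNorm x).trans (by gcongr; linarith)
  | 1 =>
    refine (Asymptotics.isBigO_top.mpr ⟨‖L‖, fun x => ?_⟩).trans hone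
    rw [← norm_iteratedFDeriv_fderiv, norm_iteratedFDeriv_zero, L.fderiv]
    simp
  | n + 2 =>
    refine (Asymptotics.isBigO_top.mpr ⟨0, fun x => ?_⟩).trans hone
    rw [← norm_iteratedFDeriv_fderiv, show fderiv ℝ L = fun _ => L from funext fun x => L.fderiv,
      iteratedFDeriv_succ_const]
    simp

/-- The function `1 / (1 + B(x, x))` attached to a bilinear form `B`. -/
def quadKernel (B : E →L[ℝ] E →L[ℝ] ℝ) (x : E) : ℝ := (1 + B x x)⁻¹

namespace quadKernel

variable {B : E →L[ℝ] E →L[ℝ] ℝ}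

lemma one_add_pos (hB : IsCoercive B) (x : E) : 0 < 1 + B x x := by
  obtain ⟨C, hC, hCB⟩ := hB
  have := hCB x
  have : 0 ≤ C * ‖x‖ * ‖x‖ := by positivity
  linarith

lemma contDiff (hB : IsCoercive B) : ContDiff ℝ ∞ (quadKernel B) :=
  ContDiff.inv (by fun_prop) fun x => (one_add_pos hB x).ne'

lemma fderiv_eq (hB : IsCoercive B) :
    fderiv ℝ (quadKernel B) = -fun x => (quadKernel B x • quadKernel B x) • (B.flip + B) x := by
  funext x
  have hquad : HasFDerivAt (fun y => 1 + B y y) ((B.flip + B) x) x := by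
    refine ((B.hasFDerivAt.clm_apply (hasFDerivAt_id x)).const_add 1).congr_fderiv ?_
    ext z
    simp [add_comm]
  refine ((hasDerivAt_inv (one_add_pos hB x).ne').comp_hasFDerivAt x hquad).fderiv.trans ?_
  ext z
  simp [quadKernel, pow_two, add_comm]

lemma isBigO_inv_one_add_norm (hB : IsCoercive B) :
    quadKernel B =O[⊤] fun x => (1 + ‖x‖)⁻¹ := by
  obtain ⟨C, hC, hCB⟩ := hB
  refine Asymptotics.isBigO_top.mpr ⟨2 + 1 / C, fun x => ?_⟩
  have hx : 0 < 1 + B x x := one_add_pos ⟨C, hC, hCB⟩ x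
  rw [quadKernel, norm_inv, norm_inv, Real.norm_of_nonneg hx.le,
    Real.norm_of_nonneg (by positivity : 0 ≤ 1 + ‖x‖), ← div_eq_mul_inv,
    inv_le_comm₀ hx (by positivity), inv_div, div_le_iff₀ (by positivity)]
  have hlin : ‖x‖ ≤ 1 + ‖x‖ ^ 2 := by nlinarith [sq_nonneg (‖x‖ - 1)]
  calc 1 + ‖x‖ ≤ 1 + (1 + ‖x‖ ^ 2) := by gcongr
    _ ≤ (1 + C * ‖x‖ * ‖x‖) * (2 + 1 / C) := by
        have hexp : (1 + C * ‖x‖ * ‖x‖) * (2 + 1 / C) =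
            2 + ‖x‖ ^ 2 + (2 * C * ‖x‖ ^ 2 + 1 / C) := by field_simp; ring
        have : 0 ≤ 2 * C * ‖x‖ ^ 2 + 1 / C := by positivity
        linarith
    _ ≤ (1 + B x x) * (2 + 1 / C) := by gcongr; exact hCB x

/-- The weight `(1 + ‖x‖)⁻¹` reproduces itself in the identity `D k = -k² (Bᵗ + B)`, because the
linear map `Bᵗ + B` grows like `1 + ‖x‖`. -/
lemma isBigO_iteratedFDeriv (hB : IsCoercive B) (n : ℕ) :
    iteratedFDeriv ℝ n (quadKernel B) =O[⊤] fun x => (1 + ‖x‖)⁻¹ := by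
  induction n using Nat.strong_induction_on with
  | _ n ih =>
    rcases n with _ | n
    · exact (Asymptotics.IsBigO.of_norm_le fun x => norm_iteratedFDeriv_zero.le).trans
        (isBigO_inv_one_add_norm hB).norm_left
    have hk := contDiff hB
    have hsq (i : ℕ) (hi : i ≤ n) :=
      isBigO_iteratedFDeriv_smul hk hk i (fun j hj => ih j (by omega)) fun j hj => ih j (by omega)
    have hD := isBigO_iteratedFDeriv_smul (hk.smul hk) (B.flip + B).contDiff n hsq
      fun i _ => isBigO_iteratedFDeriv_clm _ i
    refine (Asymptotics.IsBigO.of_norm_le fun x => ?_).trans hD.norm_left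
      |>.congr_right fun x => ?_
    · rw [← norm_iteratedFDeriv_fderiv, fderiv_eq hB, iteratedFDeriv_neg, Pi.neg_apply, norm_neg]
      rfl
    · have : 1 + ‖x‖ ≠ 0 := by positivity
      field_simp

lemma hasBoundedDerivs (hB : IsCoercive B) : HasBoundedDerivs (quadKernel B) where
  contDiff := contDiff hB
  isBigO_one n := (isBigO_iteratedFDeriv hB n).trans <| .of_norm_le fun x => by
    rw [norm_inv, Real.norm_of_nonneg (by positivity)]
    exact inv_le_one_of_one_le₀ (by linarith [norm_nonneg x])

end quadKernel

lemma iteratedFDeriv_smul_comp_affine {f : E → F} (hf : ContDiff ℝ ∞ f) (c : ℝ) (L : G →L[ℝ] E)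
    (v : E) (n : ℕ) (x : G) :
    iteratedFDeriv ℝ n (fun y => c • f (L y + v)) x =
      c • (iteratedFDeriv ℝ n f (L x + v)).compContinuousLinearMap fun _ => L := by
  have hfv : ContDiff ℝ ∞ fun y => f (y + v) := by fun_prop
  have hfL : ContDiff ℝ n fun x => f (L x + v) := by
    have := hf.of_le (m := n) (mod_cast le_top)
    fun_prop
  rw [iteratedFDeriv_const_smul_apply' hfL.contDiffAt]
  exact congrArg (c • ·) ((L.iteratedFDeriv_comp_right hfv x (mod_cast le_top)).trans
    (by rw [iteratedFDeriv_comp_add_right]))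

lemma norm_iteratedFDeriv_smul_comp_affine_le {f : E → F} (hf : ContDiff ℝ ∞ f) (c : ℝ)
    (L : G →L[ℝ] E) (v : E) (n : ℕ) (x : G) :
    ‖iteratedFDeriv ℝ n (fun y => c • f (L y + v)) x‖ ≤
      |c| * ‖L‖ ^ n * ‖iteratedFDeriv ℝ n f (L x + v)‖ := by
  have hcomp := (iteratedFDeriv ℝ n f (L x + v)).norm_compContinuousLinearMap_le fun _ => L
  rw [Fin.prod_const, mul_comm] at hcomp
  rw [iteratedFDeriv_smul_comp_affine hf, norm_smul, Real.norm_eq_abs, mul_assoc]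
  exact mul_le_mul_of_nonneg_left hcomp (abs_nonneg c)

namespace HasBoundedDerivs

variable {ι : Type*} {f : E → F} {c : ι → ℝ} {L : ι → G →L[ℝ] E}

lemma exists_summable_bound (hf : HasBoundedDerivs f)
    (hs : ∀ n : ℕ, Summable fun i => |c i| * ‖L i‖ ^ n) (v : ι → E) :
    ∃ u : ℕ → ι → ℝ, (∀ n, Summable (u n)) ∧
      ∀ n i x, ‖iteratedFDeriv ℝ n (fun y => c i • f (L i y + v i)) x‖ ≤ u n i := by
  choose C hC using fun n => Asymptotics.isBigO_top.mp (hf.isBigO_one n)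
  refine ⟨fun n i => |c i| * ‖L i‖ ^ n * C n, fun n => (hs n).mul_right _, fun n i x => ?_⟩
  refine (norm_iteratedFDeriv_smul_comp_affine_le hf.contDiff _ _ _ _ _).trans ?_
  exact mul_le_mul_of_nonneg_left (by simpa using hC n (L i x + v i)) (by positivity)

lemma contDiff_smul_comp_affine (hf : HasBoundedDerivs f) (v : ι → E) (i : ι) :
    ContDiff ℝ ∞ fun x => c i • f (L i x + v i) := by
  have := hf.contDiff
  fun_prop

variable [CompleteSpace F]

lemma hasSum_iteratedFDeriv (hf : HasBoundedDerivs f)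
    (hs : ∀ n : ℕ, Summable fun i => |c i| * ‖L i‖ ^ n) (v : ι → E) (n : ℕ) (x : G) :
    HasSum (fun i => iteratedFDeriv ℝ n (fun y => c i • f (L i y + v i)) x)
      (iteratedFDeriv ℝ n (fun y => ∑' i, c i • f (L i y + v i)) x) := by
  obtain ⟨u, hu, hbound⟩ := hf.exists_summable_bound hs v
  rw [iteratedFDeriv_tsum_apply (N := ⊤) (hf.contDiff_smul_comp_affine v) (fun k _ => hu k)
    (fun k i y _ => hbound k i y) le_top]
  exact ((hu n).of_norm_bounded fun i => hbound n i x).hasSum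

lemma tsum_smul_comp_affine (hf : HasBoundedDerivs f)
    (hs : ∀ n : ℕ, Summable fun i => |c i| * ‖L i‖ ^ n) (v : ι → E) :
    HasBoundedDerivs fun x => ∑' i, c i • f (L i x + v i) := by
  obtain ⟨u, hu, hbound⟩ := hf.exists_summable_bound hs v
  refine ⟨contDiff_tsum (N := ⊤) (hf.contDiff_smul_comp_affine v) (fun k _ => hu k)
    fun k i x _ => hbound k i x, fun n => Asymptotics.isBigO_top.mpr ⟨∑' i, u n i, fun x => ?_⟩⟩
  rw [← (hf.hasSum_iteratedFDeriv hs v n x).tsum_eq, norm_one, mul_one]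
  exact tsum_of_norm_bounded (hu n).hasSum fun i => hbound n i x

end HasBoundedDerivs

end BoundedDerivatives

section EvenDerivative

variable {𝕜 : Type*} [NontriviallyNormedField 𝕜]

/-- Leibniz' rule at `0` for the identity `(s + t²) · (s + t²)⁻¹ = 1`. -/
lemma iteratedDeriv_add_two_inv_add_sq {s : 𝕜} (hs : s ≠ 0) (n : ℕ) :
    s * iteratedDeriv (n + 2) (fun t : 𝕜 => (s + t ^ 2)⁻¹) 0 +
      (n + 2) * (n + 1) * iteratedDeriv n (fun t : 𝕜 => (s + t ^ 2)⁻¹) 0 = 0 := by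
  have hp (N : ℕ∞ω) : ContDiffAt 𝕜 N (fun t => s + t ^ 2) 0 := by fun_prop
  have hLeibniz : iteratedDeriv (n + 2) ((fun t => s + t ^ 2) * fun t => (s + t ^ 2)⁻¹) 0 = _ :=
    iteratedDeriv_mul (hp _) ((hp _).inv (by simpa using hs))
  have hone : ((fun t : 𝕜 => s + t ^ 2) * fun t => (s + t ^ 2)⁻¹) =ᶠ[𝓝 0] fun _ => 1 := by
    filter_upwards [(hp 0).continuousAt.eventually_ne (by simpa using hs)] with t ht
    exact mul_inv_cancel₀ ht
  have hderiv (i : ℕ) : iteratedDeriv (i + 1) (fun t : 𝕜 => s + t ^ 2) 0 =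
      if i = 1 then 2 else 0 := by
    rw [iteratedDeriv_const_add i.succ_pos, iteratedDeriv_fun_pow_zero]
    simp
  have hchoose : ((n + 2).choose 2 : 𝕜) * 2 = (n + 2) * (n + 1) := by
    have := congrArg (Nat.cast : ℕ → 𝕜) (Nat.add_one_mul_choose_eq (n + 1) 1)
    rw [Nat.choose_one_right] at this
    exact_mod_cast this.symm
  rw [hone.iteratedDeriv_eq, iteratedDeriv_const, Finset.sum_range_succ', Finset.sum_range_succ',
    Finset.sum_range_succ'] at hLeibniz
  rw [add_comm]
  simpa [hderiv, hchoose] using hLeibniz.symm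

lemma iteratedDeriv_even_inv_add_sq {s : 𝕜} (hs : s ≠ 0) (j : ℕ) :
    iteratedDeriv (2 * j) (fun t : 𝕜 => (s + t ^ 2)⁻¹) 0 =
      (-1) ^ j * (2 * j).factorial / s ^ (j + 1) := by
  induction j with
  | zero => simp
  | succ j ih =>
    have h := iteratedDeriv_add_two_inv_add_sq hs (2 * j)
    rw [ih] at h
    rw [← mul_right_inj' hs, show 2 * (j + 1) = 2 * j + 2 by ring, eq_neg_of_add_eq_zero_left h,
      Nat.factorial_succ, Nat.factorial_succ]
    push_cast
    field_simp
    ring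

end EvenDerivative

section VerticalDerivative

variable {f : ℝ × ℝ → ℝ}

lemma pd_zero_left_apply (hf : ContDiff ℝ ∞ f) (n : ℕ) (x : ℝ × ℝ) :
    pd (0, n) f x = iteratedFDeriv ℝ n f x fun _ => (0, 1) := by
  induction n generalizing x with
  | zero => rfl
  | succ n ih =>
    have hd : DifferentiableAt ℝ (iteratedFDeriv ℝ n f) x :=
      hf.differentiable_iteratedFDeriv (mod_cast ENat.natCast_lt_top n) x
    have hsucc : pd (0, n + 1) f x = fderiv ℝ (pd (0, n) f) x (0, 1) := by
      simp only [pd, Function.iterate_zero, id, Function.iterate_succ_apply', pd2]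
    rw [hsucc, funext ih]
    have := (ContinuousMultilinearMap.apply ℝ (fun _ : Fin n => ℝ × ℝ) ℝ
      fun _ => (0, 1)).hasFDerivAt.comp x hd.hasFDerivAt
    exact congrArg (· (0, 1)) this.fderiv

lemma pd_zero_left_eq_iteratedDeriv (hf : ContDiff ℝ ∞ f) (n : ℕ) (a t : ℝ) :
    pd (0, n) f (a, t) = iteratedDeriv n (fun s => f (a, s)) t := by
  have hline (s : ℝ) : (a, s) = ContinuousLinearMap.inr ℝ ℝ ℝ s + (a, 0) := by simp
  rw [pd_zero_left_apply hf, iteratedDeriv_eq_iteratedFDeriv]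
  have := iteratedFDeriv_smul_comp_affine hf 1 (ContinuousLinearMap.inr ℝ ℝ ℝ) (a, 0) n t
  simp only [one_smul, ← hline] at this
  rw [this]
  rfl

lemma HasBoundedDerivs.hasSum_pd {ι : Type*} (hf : HasBoundedDerivs f) {c : ι → ℝ}
    {L : ι → ℝ × ℝ →L[ℝ] ℝ × ℝ} (hs : ∀ n : ℕ, Summable fun i => |c i| * ‖L i‖ ^ n) {b : ι → ℝ}
    (hL : ∀ i, L i (0, 1) = b i • (0, 1)) (v : ι → ℝ × ℝ) (n : ℕ) (x : ℝ × ℝ) :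
    HasSum (fun i => c i * b i ^ n * pd (0, n) f (L i x + v i))
      (pd (0, n) (fun y => ∑' i, c i • f (L i y + v i)) x) := by
  rw [pd_zero_left_apply (hf.tsum_smul_comp_affine hs v).contDiff]
  have happly := (ContinuousMultilinearMap.apply ℝ (fun _ : Fin n => ℝ × ℝ) ℝ
    fun _ => (0, 1)).hasSum (hf.hasSum_iteratedFDeriv hs v n x)
  refine happly.congr_fun fun i => ?_
  rw [iteratedFDeriv_smul_comp_affine hf.contDiff, ContinuousMultilinearMap.apply_apply,
    smul_apply, ContinuousMultilinearMap.compContinuousLinearMap_apply, hL,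
    ContinuousMultilinearMap.map_smul_univ, pd_zero_left_apply hf.contDiff, Fin.prod_const,
    smul_eq_mul, smul_eq_mul, mul_assoc]

/-- The Euclidean scalar product of `ℝ × ℝ`, whose norm in Mathlib is the sup norm. -/
def dotForm : ℝ × ℝ →L[ℝ] ℝ × ℝ →L[ℝ] ℝ :=
  (ContinuousLinearMap.fst ℝ ℝ ℝ).smulRight (ContinuousLinearMap.fst ℝ ℝ ℝ) +
    (ContinuousLinearMap.snd ℝ ℝ ℝ).smulRight (ContinuousLinearMap.snd ℝ ℝ ℝ)

lemma dotForm_self (x : ℝ × ℝ) : dotForm x x = x.1 ^ 2 + x.2 ^ 2 := by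
  simp [dotForm, sq]

lemma isCoercive_dotForm : IsCoercive dotForm := by
  refine ⟨1, one_pos, fun x => ?_⟩
  rw [dotForm_self, one_mul, Prod.norm_def]
  rcases max_choice ‖x.1‖ ‖x.2‖ with h | h <;> rw [h, Real.norm_eq_abs, abs_mul_abs_self] <;>
    nlinarith [sq_nonneg x.1, sq_nonneg x.2]

lemma pd_even_quadKernel_dotForm (j : ℕ) (a : ℝ) :
    pd (0, 2 * j) (quadKernel dotForm) (a, 0) =
      (-1) ^ j * (2 * j).factorial / (1 + a ^ 2) ^ (j + 1) := by
  have hslice : (fun t => quadKernel dotForm (a, t)) = fun t => (1 + a ^ 2 + t ^ 2)⁻¹ := by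
    funext t
    rw [quadKernel, dotForm_self, add_assoc]
  rw [pd_zero_left_eq_iteratedDeriv (quadKernel.contDiff isCoercive_dotForm), hslice,
    iteratedDeriv_even_inv_add_sq (by positivity)]

end VerticalDerivative

section SequenceWeights

variable {M : ℕ → ℝ}

/-- The quotients `m_k = M_{k+1} / M_k = ρ_k⁻¹` of consecutive terms of a sequence. -/
def growthRatio (M : ℕ → ℝ) (k : ℕ) : ℝ := M (k + 1) / M k

lemma growthRatio_pos (hM : ∀ k, 0 < M k) (k : ℕ) : 0 < growthRatio M k :=
  div_pos (hM _) (hM _)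

lemma mul_growthRatio (hM : ∀ k, 0 < M k) (k : ℕ) : M k * growthRatio M k = M (k + 1) :=
  mul_div_cancel₀ _ (hM k).ne'

lemma inv_rhoSeq (M : ℕ → ℝ) (k : ℕ) : (rhoSeq M k)⁻¹ = growthRatio M k :=
  inv_div _ _

lemma exists_growthRatio_le_pow (hM : ∀ k, 0 < M k)
    (hder : ∃ B : ℝ, ∀ k : ℕ, (M (k + 1) / M k) ^ ((k : ℝ)⁻¹) ≤ B) :
    ∃ C > 0, ∀ k, 0 < k → growthRatio M k ≤ C ^ k := by
  obtain ⟨B, hB⟩ := hder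
  refine ⟨max B 1, by positivity, fun k hk => ?_⟩
  have hm := (growthRatio_pos hM k).le
  rw [← Real.rpow_inv_natCast_pow hm hk.ne']
  exact pow_le_pow_left₀ (Real.rpow_nonneg hm _) ((hB k).trans (le_max_left _ _)) k

/-- The tangent at `l` lies below the convex sequence `log M`. -/
lemma LogConvexSeq.mul_growthRatio_pow_le (hlc : LogConvexSeq M) (hM : ∀ k, 0 < M k) (l n : ℕ) :
    M l * growthRatio M l ^ n ≤ M n * growthRatio M l ^ l := by
  have hm := growthRatio_pos hM
  rcases le_total l n with hln | hnl
  · induction n, hln using Nat.le_induction with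
    | base => rfl
    | succ n hln ih =>
      calc M l * growthRatio M l ^ (n + 1) = M l * growthRatio M l ^ n * growthRatio M l := by ring
        _ ≤ M n * growthRatio M l ^ l * growthRatio M n :=
            mul_le_mul ih (hlc hln) (hm l).le (mul_pos (hM n) (pow_pos (hm l) l)).le
        _ = M (n + 1) * growthRatio M l ^ l := by rw [← mul_growthRatio hM n]; ring
  · induction hnl using Nat.decreasingInduction with
    | self => rfl
    | of_succ n hnl ih =>
      refine le_of_mul_le_mul_right ?_ (hm l)
      calc M l * growthRatio M l ^ n * growthRatio M l = M l * growthRatio M l ^ (n + 1) := by ring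
        _ ≤ M (n + 1) * growthRatio M l ^ l := ih
        _ = M n * growthRatio M l ^ l * growthRatio M n := by rw [← mul_growthRatio hM n]; ring
        _ ≤ M n * growthRatio M l ^ l * growthRatio M l :=
            mul_le_mul_of_nonneg_left (hlc hnl.le) (mul_pos (hM n) (pow_pos (hm l) l)).le

lemma LogConvexSeq.tendsto_growthRatio (hlc : LogConvexSeq M) (hM : ∀ k, 0 < M k)
    (hroot : Tendsto (fun k : ℕ => M k ^ ((k : ℝ)⁻¹)) atTop atTop) :
    Tendsto (growthRatio M) atTop atTop := by
  refine (tendsto_const_mul_atTop_of_pos (by positivity : 0 < max (M 0) 1)).mp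
    (tendsto_atTop_mono' atTop ?_ hroot)
  filter_upwards [eventually_ge_atTop 1] with k hk
  have hk0 : k ≠ 0 := Nat.one_le_iff_ne_zero.mp hk
  have hm := (growthRatio_pos hM k).le
  rw [Real.rpow_inv_le_iff_of_pos (hM k).le (by positivity) (by positivity), Real.rpow_natCast]
  calc M k ≤ M 0 * growthRatio M k ^ k := by simpa using hlc.mul_growthRatio_pow_le hM k 0
    _ ≤ max (M 0) 1 ^ k * growthRatio M k ^ k := by
        gcongr
        exact (le_max_left _ _).trans (le_self_pow₀ (le_max_right _ _) hk0)
    _ = (max (M 0) 1 * growthRatio M k) ^ k := (mul_pow _ _ _).symm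

lemma LogConvexSeq.ostrowski_growthRatio (hlc : LogConvexSeq M) (hM : ∀ k, 0 < M k) (l : ℕ) :
    ostrowski M (growthRatio M l) = growthRatio M l ^ (l + 2) / M l := by
  refine IsGreatest.csSup_eq ⟨⟨l, rfl⟩, Set.forall_mem_range.mpr fun n => ?_⟩
  rw [div_le_div_iff₀ (hM n) (hM l), pow_add, pow_add, mul_right_comm, mul_right_comm _ _ (M n)]
  refine mul_le_mul_of_nonneg_right ?_ (sq_nonneg _)
  simpa only [mul_comm] using hlc.mul_growthRatio_pow_le hM l n

/-- The weight `1 / (2^k φ(m_k))` with which the `k`-th block enters the series defining `h` and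
`F_Γ`, where `φ` is the Ostrowski function of `M`. -/
def ostrowskiWeight (M : ℕ → ℝ) (k : ℕ) : ℝ := (2 ^ k * ostrowski M (growthRatio M k))⁻¹

namespace LogConvexSeq

lemma ostrowskiWeight_eq (hlc : LogConvexSeq M) (hM : ∀ k, 0 < M k) (k : ℕ) :
    ostrowskiWeight M k = M k / (2 ^ k * growthRatio M k ^ (k + 2)) := by
  rw [ostrowskiWeight, hlc.ostrowski_growthRatio hM, ← mul_div_assoc, inv_div]

lemma ostrowskiWeight_pos (hlc : LogConvexSeq M) (hM : ∀ k, 0 < M k) (k : ℕ) :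
    0 < ostrowskiWeight M k := by
  rw [hlc.ostrowskiWeight_eq hM]
  have := hM k
  have := growthRatio_pos hM k
  positivity

lemma ostrowskiWeight_mul_pow_self (hlc : LogConvexSeq M) (hM : ∀ k, 0 < M k) (k : ℕ) :
    ostrowskiWeight M k * growthRatio M k ^ (k + 2) = M k / 2 ^ k := by
  have := (growthRatio_pos hM k).ne'
  rw [hlc.ostrowskiWeight_eq hM]
  field_simp

lemma ostrowskiWeight_mul_pow_le (hlc : LogConvexSeq M) (hM : ∀ k, 0 < M k) (k n : ℕ) :
    ostrowskiWeight M k * growthRatio M k ^ (n + 2) ≤ M n / 2 ^ k := by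
  have := growthRatio_pos hM k
  rw [hlc.ostrowskiWeight_eq hM, div_mul_eq_mul_div,
    div_le_div_iff₀ (by positivity) (by positivity)]
  have := hlc.mul_growthRatio_pow_le hM k n
  calc M k * growthRatio M k ^ (n + 2) * 2 ^ k
      = M k * growthRatio M k ^ n * (growthRatio M k ^ 2 * 2 ^ k) := by ring
    _ ≤ M n * growthRatio M k ^ k * (growthRatio M k ^ 2 * 2 ^ k) := by gcongr
    _ = M n * (2 ^ k * growthRatio M k ^ (k + 2)) := by ring

lemma summable_ostrowskiWeight_mul_pow (hlc : LogConvexSeq M) (hM : ∀ k, 0 < M k) (n : ℕ) :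
    Summable fun k => ostrowskiWeight M k * growthRatio M k ^ n := by
  have hm := growthRatio_pos hM
  have hw := hlc.ostrowskiWeight_pos hM
  have hgeom : Summable fun k : ℕ => M n / 2 ^ k / growthRatio M 0 ^ 2 :=
    ((summable_geometric_two.mul_left (M n)).congr fun k => by simp [div_eq_mul_inv]).div_const _
  refine hgeom.of_nonneg_of_le (fun k => mul_nonneg (hw k).le (pow_pos (hm k) n).le) fun k => ?_
  rw [le_div_iff₀ (pow_pos (hm 0) 2)]
  calc ostrowskiWeight M k * growthRatio M k ^ n * growthRatio M 0 ^ 2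
      ≤ ostrowskiWeight M k * growthRatio M k ^ n * growthRatio M k ^ 2 :=
        mul_le_mul_of_nonneg_left (pow_le_pow_left₀ (hm 0).le (hlc k.zero_le) 2)
          (mul_nonneg (hw k).le (pow_pos (hm k) n).le)
    _ = ostrowskiWeight M k * growthRatio M k ^ (n + 2) := by ring
    _ ≤ M n / 2 ^ k := hlc.ostrowskiWeight_mul_pow_le hM k n

lemma summable_ostrowskiWeight_mul_norm_pow {V : Type*} [SeminormedAddGroup V] {L : ℕ → V}
    (hlc : LogConvexSeq M) (hM : ∀ k, 0 < M k) (hL : ∀ k, ‖L k‖ ≤ max 1 (growthRatio M k))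
    (p n : ℕ) : Summable fun k => ostrowskiWeight M k * growthRatio M k ^ p * ‖L k‖ ^ n := by
  have hm k := (growthRatio_pos hM k).le
  have hw k := (hlc.ostrowskiWeight_pos hM k).le
  refine ((hlc.summable_ostrowskiWeight_mul_pow hM p).add
    (hlc.summable_ostrowskiWeight_mul_pow hM (p + n))).of_nonneg_of_le
    (fun k => mul_nonneg (mul_nonneg (hw k) (pow_nonneg (hm k) p)) (by positivity)) fun k => ?_
  have hmax : ‖L k‖ ^ n ≤ 1 + growthRatio M k ^ n := by
    refine (pow_le_pow_left₀ (norm_nonneg _) (hL k) n).trans ?_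
    rcases max_choice 1 (growthRatio M k) with h | h <;> rw [h]
    · simpa using pow_nonneg (hm k) n
    · simp
  calc ostrowskiWeight M k * growthRatio M k ^ p * ‖L k‖ ^ n
      ≤ ostrowskiWeight M k * growthRatio M k ^ p * (1 + growthRatio M k ^ n) :=
        mul_le_mul_of_nonneg_left hmax (mul_nonneg (hw k) (pow_nonneg (hm k) p))
    _ = _ := by ring

end LogConvexSeq

end SequenceWeights

section BlockSeries

variable {M : ℕ → ℝ}

/-- The dilation `(x₁, x₂) ↦ (x₁, b x₂)`; it turns `1 / (1 + x₁² + x₂²)` into a summand of `h`. -/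
def verticalDilation (b : ℝ) : ℝ × ℝ →L[ℝ] ℝ × ℝ :=
  (ContinuousLinearMap.id ℝ ℝ).prodMap (b • ContinuousLinearMap.id ℝ ℝ)

@[simp] lemma verticalDilation_apply (b : ℝ) (x : ℝ × ℝ) :
    verticalDilation b x = (x.1, b * x.2) := rfl

lemma norm_verticalDilation_le {b : ℝ} (hb : 0 ≤ b) : ‖verticalDilation b‖ ≤ max 1 b := by
  refine ContinuousLinearMap.opNorm_le_bound _ (by positivity) fun x => ?_
  have h1 : ‖x.1‖ ≤ max 1 b * ‖x‖ := by
    simpa using mul_le_mul (le_max_left 1 b) (norm_fst_le x) (norm_nonneg _) (by positivity)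
  have h2 : ‖b * x.2‖ ≤ max 1 b * ‖x‖ := by
    rw [norm_mul, Real.norm_of_nonneg hb]
    gcongr
    exacts [le_max_right 1 b, norm_snd_le x]
  exact max_le h1 h2

lemma baseH_eq_tsum (M : ℕ → ℝ) : baseH M = fun x =>
    ∑' k, (ostrowskiWeight M (k + 1) * growthRatio M (k + 1) ^ 2) •
      quadKernel dotForm (verticalDilation (growthRatio M (k + 1)) x + 0) := by
  funext x
  refine tsum_congr fun k => ?_
  rw [add_zero, verticalDilation_apply, quadKernel, dotForm_self, ostrowskiWeight, smul_eq_mul]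
  simp only [growthRatio]
  ring

lemma growthRatio_smul_add (M : ℕ → ℝ) (l : ℕ) (e : ℝ) (x : ℝ × ℝ) :
    (growthRatio M l • ContinuousLinearMap.id ℝ (ℝ × ℝ)) x + (-(e / rhoSeq M l), 0) =
      (growthRatio M l * (x.1 - e), growthRatio M l * x.2) := by
  rw [← inv_rhoSeq, mul_sub, sub_eq_add_neg, div_eq_inv_mul]
  exact Prod.ext rfl (add_zero _)

lemma FGamma_eq_tsum (M : ℕ → ℝ) (E : ℝ → ℝ) (Λ : Set ℕ) : FGamma M E Λ = fun x =>
    ∑' l, Λ.indicator (ostrowskiWeight M) l •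
      baseH M ((growthRatio M l • ContinuousLinearMap.id ℝ (ℝ × ℝ)) x +
        (-(E (rhoSeq M l) / rhoSeq M l), 0)) := by
  funext x
  refine tsum_congr fun l => ?_
  rw [growthRatio_smul_add]
  by_cases hl : l ∈ Λ
  · rw [Set.indicator_of_mem hl, Set.indicator_of_mem hl, blockF, ostrowskiWeight, ← inv_rhoSeq,
      ← sub_div, ← div_eq_inv_mul, ← div_eq_inv_mul, mul_comm (2 ^ l), smul_eq_mul, inv_mul_eq_div]
  · simp [hl]

namespace LogConvexSeq

lemma summable_baseH (hlc : LogConvexSeq M) (hM : ∀ k, 0 < M k) (n : ℕ) :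
    Summable fun k => |ostrowskiWeight M (k + 1) * growthRatio M (k + 1) ^ 2| *
      ‖verticalDilation (growthRatio M (k + 1))‖ ^ n := by
  have hnonneg k : 0 ≤ ostrowskiWeight M k * growthRatio M k ^ 2 :=
    mul_nonneg (hlc.ostrowskiWeight_pos hM k).le (sq_nonneg _)
  simp only [abs_of_nonneg (hnonneg _)]
  exact (summable_nat_add_iff 1).mpr (hlc.summable_ostrowskiWeight_mul_norm_pow hM
    (fun k => norm_verticalDilation_le (growthRatio_pos hM k).le) 2 n)

lemma summable_FGamma (hlc : LogConvexSeq M) (hM : ∀ k, 0 < M k) (Λ : Set ℕ) (n : ℕ) :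
    Summable fun l => |Λ.indicator (ostrowskiWeight M) l| *
      ‖growthRatio M l • ContinuousLinearMap.id ℝ (ℝ × ℝ)‖ ^ n := by
  have hnorm l :
      ‖growthRatio M l • ContinuousLinearMap.id ℝ (ℝ × ℝ)‖ ≤ max 1 (growthRatio M l) := by
    rw [norm_smul, ContinuousLinearMap.norm_id, mul_one,
      Real.norm_of_nonneg (growthRatio_pos hM l).le]
    exact le_max_right _ _
  refine (hlc.summable_ostrowskiWeight_mul_norm_pow hM hnorm 0 n).of_nonneg_of_le
    (fun l => by positivity) fun l => ?_
  rw [pow_zero, mul_one, abs_of_nonneg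
    (Set.indicator_nonneg (fun k _ => (hlc.ostrowskiWeight_pos hM k).le) l)]
  gcongr
  exact Set.indicator_le_self' (fun k _ => (hlc.ostrowskiWeight_pos hM k).le) l

lemma hasBoundedDerivs_baseH (hlc : LogConvexSeq M) (hM : ∀ k, 0 < M k) :
    HasBoundedDerivs (baseH M) := by
  rw [baseH_eq_tsum]
  exact (quadKernel.hasBoundedDerivs isCoercive_dotForm).tsum_smul_comp_affine
    (hlc.summable_baseH hM) fun _ => 0

lemma hasSum_pd_baseH (hlc : LogConvexSeq M) (hM : ∀ k, 0 < M k) (j : ℕ) (a : ℝ) :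
    HasSum (fun k => ostrowskiWeight M (k + 1) * growthRatio M (k + 1) ^ (2 * j + 2) *
        ((2 * j).factorial / (1 + a ^ 2) ^ (j + 1)))
      ((-1) ^ j * pd (0, 2 * j) (baseH M) (a, 0)) := by
  have hsum := (quadKernel.hasBoundedDerivs isCoercive_dotForm).hasSum_pd (hlc.summable_baseH hM)
    (b := fun k => growthRatio M (k + 1)) (fun k => by simp [verticalDilation]) (fun _ => 0)
    (2 * j) (a, 0)
  rw [← baseH_eq_tsum] at hsum
  refine (hsum.mul_left ((-1) ^ j)).congr_fun fun k => ?_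
  have haxis : verticalDilation (growthRatio M (k + 1)) (a, 0) + 0 = (a, 0) := by
    simp
  have hsign : ((-1 : ℝ) ^ j) * (-1) ^ j = 1 := by simp [← mul_pow]
  rw [haxis, pd_even_quadKernel_dotForm]
  linear_combination (-(ostrowskiWeight M (k + 1) * growthRatio M (k + 1) ^ (2 * j + 2) *
    ((2 * j).factorial / (1 + a ^ 2) ^ (j + 1)))) * hsign

lemma pd_baseH_nonneg (hlc : LogConvexSeq M) (hM : ∀ k, 0 < M k) (j : ℕ) (a : ℝ) :
    0 ≤ (-1) ^ j * pd (0, 2 * j) (baseH M) (a, 0) := by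
  refine (hlc.hasSum_pd_baseH hM j a).nonneg fun k => ?_
  have := hlc.ostrowskiWeight_pos hM (k + 1)
  have := growthRatio_pos hM (k + 1)
  positivity

/-- The bound is the summand of index `2 * j` (the series starts at index `1`). -/
lemma le_pd_baseH_zero (hlc : LogConvexSeq M) (hM : ∀ k, 0 < M k) {j : ℕ} (hj : 0 < j) :
    (2 * j).factorial * M (2 * j) / 2 ^ (2 * j) ≤ (-1) ^ j * pd (0, 2 * j) (baseH M) (0, 0) := by
  have hsum := hlc.hasSum_pd_baseH hM j 0
  refine le_trans (le_of_eq ?_) (le_hasSum hsum (2 * j - 1) fun k _ => ?_)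
  · rw [Nat.sub_add_cancel (by omega), hlc.ostrowskiWeight_mul_pow_self hM]
    rw [zero_pow two_ne_zero, add_zero, one_pow, div_one]
    ring
  · have := hlc.ostrowskiWeight_pos hM (k + 1)
    have := growthRatio_pos hM (k + 1)
    positivity

lemma hasSum_pd_FGamma (hlc : LogConvexSeq M) (hM : ∀ k, 0 < M k) (E : ℝ → ℝ) (Λ : Set ℕ)
    (n : ℕ) (a : ℝ) :
    HasSum (fun l => Λ.indicator (ostrowskiWeight M) l * growthRatio M l ^ n *
        pd (0, n) (baseH M) (growthRatio M l * (a - E (rhoSeq M l)), 0))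
      (pd (0, n) (FGamma M E Λ) (a, 0)) := by
  have hsum := (hlc.hasBoundedDerivs_baseH hM).hasSum_pd (hlc.summable_FGamma hM Λ)
    (b := growthRatio M) (fun l => by simp) (fun l => (-(E (rhoSeq M l) / rhoSeq M l), 0)) n (a, 0)
  rw [← FGamma_eq_tsum] at hsum
  simpa only [growthRatio_smul_add, mul_zero] using hsum

lemma le_abs_pd_FGamma (hlc : LogConvexSeq M) (hM : ∀ k, 0 < M k) (E : ℝ → ℝ) {Λ : Set ℕ}
    {l : ℕ} (hl : l ∈ Λ) (heven : Even l) (hpos : 0 < l) :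
    l.factorial * M l ^ 2 / (growthRatio M l ^ 2 * 4 ^ l) ≤
      |pd (0, l) (FGamma M E Λ) (E (rhoSeq M l), 0)| := by
  obtain ⟨j, rfl⟩ := heven.two_dvd
  have hm := growthRatio_pos hM (2 * j)
  have hw := hlc.ostrowskiWeight_pos hM
  have hsum := (hlc.hasSum_pd_FGamma hM E Λ (2 * j) (E (rhoSeq M (2 * j)))).mul_left ((-1) ^ j)
  simp only [mul_left_comm ((-1 : ℝ) ^ j)] at hsum
  calc (2 * j).factorial * M (2 * j) ^ 2 / (growthRatio M (2 * j) ^ 2 * 4 ^ (2 * j))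
      = ostrowskiWeight M (2 * j) * growthRatio M (2 * j) ^ (2 * j) *
          ((2 * j).factorial * M (2 * j) / 2 ^ (2 * j)) := by
        rw [hlc.ostrowskiWeight_eq hM, show (4 : ℝ) = 2 * 2 by norm_num, mul_pow]
        field_simp
        ring
    _ ≤ ostrowskiWeight M (2 * j) * growthRatio M (2 * j) ^ (2 * j) *
          ((-1) ^ j * pd (0, 2 * j) (baseH M) (0, 0)) :=
        mul_le_mul_of_nonneg_left (hlc.le_pd_baseH_zero hM (by omega))
          (mul_nonneg (hw _).le (by positivity))
    _ ≤ (-1) ^ j * pd (0, 2 * j) (FGamma M E Λ) (E (rhoSeq M (2 * j)), 0) := by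
        refine le_trans (le_of_eq ?_) (le_hasSum hsum (2 * j) fun k _ => ?_)
        · simp [hl]
        · exact mul_nonneg (mul_nonneg (Set.indicator_nonneg (fun i _ => (hw i).le) k)
            (pow_pos (growthRatio_pos hM k) _).le) (hlc.pd_baseH_nonneg hM j _)
    _ ≤ |pd (0, 2 * j) (FGamma M E Λ) (E (rhoSeq M (2 * j)), 0)| := by
        refine (le_abs_self _).trans_eq ?_
        simp [abs_mul]

lemma exists_le_abs_pd_FGamma (hlc : LogConvexSeq M) (hM : ∀ k, 0 < M k)
    (hder : ∃ B : ℝ, ∀ k : ℕ, (M (k + 1) / M k) ^ ((k : ℝ)⁻¹) ≤ B) :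
    ∃ ε > 0, ∀ (E : ℝ → ℝ) (Λ : Set ℕ), ∀ l ∈ Λ, Even l → 0 < l →
      ε ^ l * l.factorial * M l * M l / 4 ^ l ≤
        |pd (0, l) (FGamma M E Λ) (E (rhoSeq M l), 0)| := by
  obtain ⟨C, hC, hmC⟩ := exists_growthRatio_le_pow hM hder
  refine ⟨(C ^ 2)⁻¹, by positivity, fun E Λ l hl heven hpos => ?_⟩
  refine le_trans ?_ (hlc.le_abs_pd_FGamma hM E hl heven hpos)
  have hm := growthRatio_pos hM l
  calc (C ^ 2)⁻¹ ^ l * l.factorial * M l * M l / 4 ^ l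
      = l.factorial * M l ^ 2 / ((C ^ l) ^ 2 * 4 ^ l) := by
        rw [inv_pow, pow_right_comm]
        field_simp
    _ ≤ l.factorial * M l ^ 2 / (growthRatio M l ^ 2 * 4 ^ l) := by
        gcongr
        exact hmC l hpos

lemma tendsto_comp_rhoSeq (hlc : LogConvexSeq M) (hM : ∀ k, 0 < M k)
    (hroot : Tendsto (fun k : ℕ => M k ^ ((k : ℝ)⁻¹)) atTop atTop) {E : ℝ → ℝ}
    (hE : ContinuousWithinAt E (Set.Ici 0) 0) :
    Tendsto (fun n => E (rhoSeq M n)) atTop (𝓝 (E 0)) := by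
  have hρ : rhoSeq M = (growthRatio M)⁻¹ := by
    funext n
    rw [Pi.inv_apply, ← inv_rhoSeq, inv_inv]
  refine hE.tendsto.comp (tendsto_nhdsWithin_iff.mpr ⟨?_, .of_forall fun n => ?_⟩)
  · exact hρ ▸ (hlc.tendsto_growthRatio hM hroot).inv_tendsto_atTop
  · exact (div_pos (hM _) (hM _)).le

end LogConvexSeq

end BlockSeries

theorem FGamma_lower_estimate_general {M : ℕ → ℝ} (hMpos : ∀ k, 0 < M k) (hMlc : LogConvexSeq M)
    (hMder : ∃ B : ℝ, ∀ k : ℕ, (M (k + 1) / M k) ^ ((k : ℝ)⁻¹) ≤ B)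
    (hMan : Tendsto (fun k : ℕ => M k ^ ((k : ℝ)⁻¹)) atTop atTop) :
    (∀ E : ℝ → ℝ, ContinuousWithinAt E (Set.Ici 0) 0 →
      Tendsto (fun n : ℕ => ((E (rhoSeq M n), (0 : ℝ)) : ℝ × ℝ)) atTop (𝓝 (E 0, 0))) ∧
    ∃ ε > (0 : ℝ), ∀ (E : ℝ → ℝ) (Λ : Set ℕ), ∀ l ∈ Λ, Even l → 0 < l →
      ε ^ l * (Nat.factorial l) * M l * M l / 4 ^ l ≤
        |pd (0, l) (FGamma M E Λ) (E (rhoSeq M l), 0)| :=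
  ⟨fun _ hE => (hMlc.tendsto_comp_rhoSeq hMpos hMan hE).prodMk_nhds tendsto_const_nhds,
    hMlc.exists_le_abs_pd_FGamma hMpos hMder⟩

/-- Lemma 3.11 (lower estimates on `F_Γ`): if `C_M` is closed under differentiation and
properly contains the analytic functions, there is `B > 0`, depending only on `M`, such
that whenever `δ_λ ≥ B M_λ^{-1/λ}` for all `λ ∈ Λ` with `λ ≥ lam0`, the points
`x_λ = (E(ρ_λ), 0)` converge to `(0,0)` and there is `ε > 0` with
`|∂^λ F_Γ/∂x₂^λ(x_λ)| ≥ ε^λ λ! M_λ M_λ / 4^λ` for all such `λ`. -/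
theorem FGamma_lower_estimate (M : ℕ → ℝ) (hMpos : ∀ k, 0 < M k) (hMmono : Monotone M)
    (hM0 : M 0 = 1) (hMlc : LogConvexSeq M)
    (hMder : ∃ B : ℝ, ∀ k : ℕ, (M (k + 1) / M k) ^ ((k : ℝ)⁻¹) ≤ B)
    (hMan : Tendsto (fun k : ℕ => M k ^ ((k : ℝ)⁻¹)) atTop atTop) :
    ∃ B > (0 : ℝ), ∀ E : ℝ → ℝ,
      (∀ r : ℝ, 0 ≤ r → 0 ≤ E r ∧ E r < 1) → StrictMonoOn E (Set.Ici 0) →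
      ContinuousOn E (Set.Ici 0) → E 0 = 0 →
      Tendsto (fun r => E r / r) (𝓝[>] (0 : ℝ)) atTop →
      ∀ Λ : Set ℕ, (∀ l ∈ Λ, Even l ∧ 0 < l) → (∀ n : ℕ, ∃ l ∈ Λ, n < l) →
      (∀ l ∈ Λ, 1 < E (rhoSeq M l) / rhoSeq M l) →
      ∀ lam0 ∈ Λ,
      (∀ l ∈ Λ, lam0 ≤ l →
        B * (M l ^ ((l : ℝ)⁻¹))⁻¹ ≤
          Metric.infDist (E (rhoSeq M l)) ((fun l' => E (rhoSeq M l')) '' (Λ \ {l}))) →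
      Tendsto (fun n : ℕ => ((E (rhoSeq M n), (0 : ℝ)) : ℝ × ℝ)) atTop (𝓝 (0, 0)) ∧
      ∃ ε > (0 : ℝ), ∀ l ∈ Λ, lam0 ≤ l →
        ε ^ l * (Nat.factorial l) * M l * M l / 4 ^ l ≤
          |pd (0, l) (FGamma M E Λ) (E (rhoSeq M l), 0)| := by
  obtain ⟨htendsto, ε, hε, hbound⟩ := FGamma_lower_estimate_general hMpos hMlc hMder hMan
  exact ⟨1, one_pos, fun E _ _ hE hE0 _ Λ hΛ _ _ _ _ _ =>
    ⟨by simpa only [hE0] using htendsto E (hE 0 Set.self_mem_Ici),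
      ε, hε, fun l hl _ => hbound E Λ l hl (hΛ l hl).1 (hΛ l hl).2⟩⟩
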